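/- arXiv:1103.0040 — 5 statements merged into one kernel-verified Lean document; each statement's English description precedes it below -/
import Mathlib

section
/- Let m be a positive integer and let v : 2^[m] → ℝ be a normalized (v(∅)=0), monotone (v(A) ≤ v(B) whenever A ⊆ B), submodular (v(A)+v(B) ≥ v(A∪B)+v(A∩B) for all A,B) set function. Then for every S ⊆ [m], the multilinear extension F_v evaluated at the point x with x_j = 1 - 1/e for j ∈ S and x_j = 0 for j ∉ S satisfies F_v(x) ≥ (1 - 1/e)·v(S). Equivalently, if a random set S' includes each element of S independently with probability 1 - 1/e, then E[v(S')] ≥ (1 - 1/e)·v(S). -/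
/-!
The constant `1 - 1/e` plays no special role: for every `p ∈ [0, 1]`, a random subset `T` of `S`
containing each element independently with probability `p` satisfies `E[v(T)] ≥ p · v(S)`.
This is proved by adding the elements of `S` one at a time. Conditioning on whether the new element
`a ∉ S` is chosen, submodularity gives `v(T ∪ {a}) - v(T) ≥ v(S ∪ {a}) - v(S)` for every `T ⊆ S`,
so the expectation grows by at least `p · (v(S ∪ {a}) - v(S))` (`sampling_lower_bound`).
The multilinear extension at `p · 1_S` is exactly this expectation (`multilinearExt_indicator`).
-/

open Finset

/-- The multilinear extension of a set function `v` on ground set `Fin m`: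
`F_v(x) = Σ_{S ⊆ [m]} v(S) · Π_{j ∈ S} x_j · Π_{j ∉ S} (1 - x_j)`. -/
noncomputable def multilinearExt {m : ℕ} (v : Finset (Fin m) → ℝ) (x : Fin m → ℝ) : ℝ :=
  ∑ S : Finset (Fin m), v S * ((∏ j ∈ S, x j) * ∏ j ∈ Sᶜ, (1 - x j))

/-- At `p · 1_S` only the subsets of `S` have nonzero weight, and the weight of `T ⊆ S` is its
probability under independent sampling from `S` with rate `p`. -/
theorem multilinearExt_indicator {m : ℕ} (v : Finset (Fin m) → ℝ) (p : ℝ) (S : Finset (Fin m)) :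
    multilinearExt v (fun j => if j ∈ S then p else 0)
      = ∑ T ∈ S.powerset, v T * (p ^ #T * (1 - p) ^ (#S - #T)) := by
  unfold multilinearExt
  rw [← Finset.sum_subset (Finset.subset_univ S.powerset)]
  · refine Finset.sum_congr rfl fun T hT => ?_
    have hTS : T ⊆ S := Finset.mem_powerset.1 hT
    have h1 : ∏ j ∈ T, (if j ∈ S then p else 0) = p ^ #T :=
      Finset.prod_eq_pow_card fun j hj => if_pos (hTS hj)
    have h2 : ∏ j ∈ Tᶜ, (1 - if j ∈ S then p else 0) = (1 - p) ^ (#S - #T) := by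
      -- Only the indices in `S \ T` contribute a factor different from `1`.
      rw [← Finset.card_sdiff_of_subset hTS, ← Finset.prod_subset (s₁ := S \ T)]
      · exact Finset.prod_eq_pow_card fun j hj => by rw [if_pos (Finset.mem_sdiff.1 hj).1]
      · intro j hj
        exact Finset.mem_compl.2 (Finset.mem_sdiff.1 hj).2
      · intro j hj hj'
        have : j ∉ S := fun h => hj' (Finset.mem_sdiff.2 ⟨h, Finset.mem_compl.1 hj⟩)
        simp [this]
    simp only [h1, h2]
  · intro T _ hT
    obtain ⟨j, hjT, hjS⟩ := Finset.not_subset.1 (fun h => hT (Finset.mem_powerset.2 h))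
    have : ∏ j ∈ T, (if j ∈ S then p else 0) = 0 :=
      Finset.prod_eq_zero hjT (if_neg hjS)
    simp [this]

/-- Independent sampling of `S` at rate `p` retains, in expectation, at least the fraction `p` of the
value of `S`, for a normalized submodular `v`. -/
theorem sampling_lower_bound {α : Type*} [DecidableEq α] (v : Finset α → ℝ) (hnorm : v ∅ = 0)
    (hsub : ∀ A B : Finset α, v A + v B ≥ v (A ∪ B) + v (A ∩ B))
    {p : ℝ} (hp0 : 0 ≤ p) (hp1 : p ≤ 1) (S : Finset α) :
    p * v S ≤ ∑ T ∈ S.powerset, v T * (p ^ #T * (1 - p) ^ (#S - #T)) := by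
  induction S using Finset.induction_on with
  | empty => simp [hnorm]
  | insert a S ha ih =>
    have hq : 0 ≤ 1 - p := sub_nonneg.2 hp1
    have htotal : ∑ T ∈ S.powerset, p ^ #T * (1 - p) ^ (#S - #T) = 1 := by
      rw [Finset.sum_pow_mul_eq_add_pow]; simp
    set d := v (insert a S) - v S with hd
    -- Pair each `T ⊆ S` with `insert a T`; submodularity is applied to `insert a T` and `S`.
    have hstep : ∑ T ∈ S.powerset, (v T + p * d) * (p ^ #T * (1 - p) ^ (#S - #T))
        ≤ ∑ T ∈ (insert a S).powerset, v T * (p ^ #T * (1 - p) ^ (#(insert a S) - #T)) := by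
      rw [Finset.sum_powerset_insert ha, ← Finset.sum_add_distrib]
      refine Finset.sum_le_sum fun T hT => ?_
      have hTS : T ⊆ S := Finset.mem_powerset.1 hT
      have haT : a ∉ T := fun h => ha (hTS h)
      have hmarg : v T + d ≤ v (insert a T) := by
        have h := hsub (insert a T) S
        rw [Finset.insert_union, Finset.union_eq_right.2 hTS,
          Finset.insert_inter_of_notMem ha, Finset.inter_eq_left.2 hTS] at h
        linarith
      have hcard : #S + 1 - #T = (#S - #T) + 1 := by
        have := Finset.card_le_card hTS
        omega
      rw [Finset.card_insert_of_notMem ha, Finset.card_insert_of_notMem haT, hcard,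
        Nat.add_sub_add_right, pow_succ, pow_succ]
      have hw : 0 ≤ p ^ #T * (1 - p) ^ (#S - #T) * p := by positivity
      have := mul_le_mul_of_nonneg_left hmarg hw
      linarith
    simp only [add_mul, Finset.sum_add_distrib] at hstep
    rw [← Finset.mul_sum, htotal] at hstep
    rw [hd] at hstep
    linarith

/-- For a normalized, monotone, submodular set function `v` and any `S ⊆ [m]`, the
multilinear extension evaluated at the point with coordinates `1 - 1/e` on `S` and `0`
elsewhere is at least `(1 - 1/e) · v(S)`. -/
theorem multilinearExt_at_scaled_indicator_ge
    (m : ℕ) (hm : 0 < m) (v : Finset (Fin m) → ℝ)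
    (hnorm : v ∅ = 0)
    (hmono : ∀ A B : Finset (Fin m), A ⊆ B → v A ≤ v B)
    (hsub : ∀ A B : Finset (Fin m), v A + v B ≥ v (A ∪ B) + v (A ∩ B))
    (S : Finset (Fin m)) :
    multilinearExt v (fun j => if j ∈ S then 1 - 1 / Real.exp 1 else 0)
      ≥ (1 - 1 / Real.exp 1) * v S := by
  have h1 : 1 / Real.exp 1 ≤ 1 :=
    (div_le_one (Real.exp_pos 1)).2 (Real.one_le_exp zero_le_one)
  have h0 : 0 ≤ 1 / Real.exp 1 := by positivity
  rw [multilinearExt_indicator]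
  exact sampling_lower_bound v hnorm hsub (by linarith) (by linarith) S
end

section
/- Let M be a matroid on ground set [m] with rank function r : 2^[m] → ℕ. Then for every S ⊆ [m], the discrete Hessian matrix H^r_S is negative semidefinite. -/
/-!
Let `r` be the rank function. Adjoining `k` to `A` raises the rank by one if `k ∉ cl A` and leaves
it unchanged otherwise, so `H(j,k) = [k ∉ cl (S + j)] - [k ∉ cl S] = -[k ∈ cl (S + j) \ cl S]`.
By the exchange property of the closure, `k ∈ cl (S + j) \ cl S` holds exactly when `j, k ∉ cl S`
and `cl (S + j) = cl (S + k)`, i.e. when `j` and `k` are parallel nonloops of the contraction `M / S`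
(`discreteHessian_matroidRank_apply`). Hence `H = -∑ F, 𝟙_F 𝟙_Fᵀ`, with `F` running over the parallel
classes of `M / S`, and `zᵀ H z` is minus the sum of the squares of the sums of `z` over these classes
(`sum_sum_class_nonneg`).
-/

open Finset Matrix
open scoped Classical

/-- The rank function of a matroid `M` on ground set `Fin m`: the maximum cardinality of an
independent set contained in `A`. -/
noncomputable def matroidRank {m : ℕ} (M : Matroid (Fin m)) (A : Finset (Fin m)) : ℕ :=
  (A.powerset.filter (fun I : Finset (Fin m) => M.Indep (I : Set (Fin m)))).sup Finset.card

/-- The discrete Hessian matrix of a set function `v` at `S`: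
`H^v_S(j,k) = v(S ∪ {j,k}) − v(S ∪ {j}) − v(S ∪ {k}) + v(S)`. -/
def discreteHessian {m : ℕ} (v : Finset (Fin m) → ℝ) (S : Finset (Fin m)) :
    Matrix (Fin m) (Fin m) ℝ :=
  Matrix.of fun j k => v (S ∪ {j, k}) - v (S ∪ {j}) - v (S ∪ {k}) + v S

lemma matroidRank_eq_eRk {m : ℕ} (M : Matroid (Fin m)) (A : Finset (Fin m)) :
    (matroidRank M A : ℕ∞) = M.eRk (A : Set (Fin m)) := by
  apply le_antisymm
  · have hne : (A.powerset.filter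
        (fun I : Finset (Fin m) => M.Indep (I : Set (Fin m)))).Nonempty :=
      ⟨∅, by simp⟩
    obtain ⟨I, hI, hcard⟩ := Finset.exists_mem_eq_sup _ hne Finset.card
    rw [Finset.mem_filter, Finset.mem_powerset] at hI
    rw [matroidRank, hcard, ← Set.encard_coe_eq_coe_finsetCard]
    exact hI.2.encard_le_eRk_of_subset (by exact_mod_cast hI.1)
  · rw [Matroid.eRk_le_iff]
    intro I hIA hI
    obtain ⟨J, rfl⟩ : ∃ J : Finset (Fin m), (J : Set (Fin m)) = I :=
      ⟨I.toFinite.toFinset, by simp⟩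
    rw [Set.encard_coe_eq_coe_finsetCard, Nat.cast_le]
    refine Finset.le_sup (f := Finset.card) ?_
    rw [Finset.mem_filter, Finset.mem_powerset]
    exact ⟨by exact_mod_cast hIA, hI⟩

lemma matroidRank_insert {m : ℕ} (M : Matroid (Fin m)) (hE : M.E = Set.univ)
    (A : Finset (Fin m)) (k : Fin m) :
    matroidRank M (insert k A) =
      matroidRank M A + if k ∈ M.closure (A : Set (Fin m)) then 0 else 1 := by
  have h : (matroidRank M (insert k A) : ℕ∞) =
      ((matroidRank M A + if k ∈ M.closure (A : Set (Fin m)) then 0 else 1 : ℕ) : ℕ∞) := by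
    rw [Nat.cast_add, matroidRank_eq_eRk, matroidRank_eq_eRk, Finset.coe_insert]
    split_ifs with hk
    · rw [← M.eRk_insert_closure_eq, Set.insert_eq_of_mem hk, M.eRk_closure_eq]
      simp
    · rw [Matroid.eRk_insert_eq_add_one ⟨by simp [hE], hk⟩]
      simp
  exact_mod_cast h

/-- The Hessian of the rank function at `S` is minus the indicator of being parallel nonloops in
the contraction `M / S`. -/
lemma discreteHessian_matroidRank_apply {m : ℕ} (M : Matroid (Fin m)) (hE : M.E = Set.univ)
    (S : Finset (Fin m)) (j k : Fin m) :
    discreteHessian (fun A => (matroidRank M A : ℝ)) S j k =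
      -(if j ∉ M.closure (S : Set (Fin m)) ∧ k ∉ M.closure (S : Set (Fin m)) ∧
          M.closure (insert j (S : Set (Fin m))) = M.closure (insert k (S : Set (Fin m)))
        then 1 else 0) := by
  have e1 : S ∪ {j, k} = insert k (insert j S) := by ext; simp; tauto
  have e2 : S ∪ {j} = insert j S := by ext; simp
  have e3 : S ∪ {k} = insert k S := by ext; simp
  have key : (k ∈ M.closure (insert j (S : Set (Fin m))) ∧ k ∉ M.closure (S : Set (Fin m))) ↔
      (j ∉ M.closure (S : Set (Fin m)) ∧ k ∉ M.closure (S : Set (Fin m)) ∧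
        M.closure (insert j (S : Set (Fin m))) = M.closure (insert k (S : Set (Fin m)))) := by
    constructor
    · rintro ⟨h1, h2⟩
      have hj : j ∉ M.closure (S : Set (Fin m)) := fun hj =>
        h2 (by rwa [Matroid.closure_insert_eq_of_mem_closure hj] at h1)
      exact ⟨hj, h2, (Matroid.closure_insert_congr ⟨h1, h2⟩).symm⟩
    · rintro ⟨-, h2, h3⟩
      refine ⟨?_, h2⟩
      rw [h3]
      exact M.mem_closure_of_mem' (Set.mem_insert _ _) (by simp [hE])
  have hmono : k ∈ M.closure (S : Set (Fin m)) → k ∈ M.closure (insert j (S : Set (Fin m))) :=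
    fun h => M.closure_subset_closure (Set.subset_insert _ _) h
  rw [← if_congr key rfl rfl]
  simp only [discreteHessian, Matrix.of_apply, e1, e2, e3, matroidRank_insert M hE,
    Finset.coe_insert]
  by_cases h1 : k ∈ M.closure (S : Set (Fin m))
  · simp [h1, hmono h1]
  · by_cases h2 : k ∈ M.closure (insert j (S : Set (Fin m))) <;> simp [h1, h2]

/-- The quadratic form of the relation `N j ∧ N k ∧ c j = c k` is nonnegative, being the sum over
the values `F` of `c` of the squares of the sums of `z` over `{j | N j ∧ c j = F}`. -/
lemma sum_sum_class_nonneg {ι κ : Type*} [Fintype ι] (N : ι → Prop) (c : ι → κ) (z : ι → ℝ) :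
    0 ≤ ∑ j, ∑ k, z j * z k * (if N j ∧ N k ∧ c j = c k then 1 else 0) := by
  have h : ∑ j, ∑ k, z j * z k * (if N j ∧ N k ∧ c j = c k then (1 : ℝ) else 0) =
      ∑ F ∈ Finset.univ.image c, (∑ j, if N j ∧ c j = F then z j else 0) ^ 2 := by
    simp_rw [sq, Finset.sum_mul_sum]
    rw [Finset.sum_comm]
    simp_rw [Finset.sum_comm (s := Finset.univ.image c)]
    rw [Finset.sum_comm]
    refine Finset.sum_congr rfl fun j _ => Finset.sum_congr rfl fun k _ => ?_
    -- Only the class `F = c j` contributes to the coefficient of `z j * z k`.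
    rw [Finset.sum_eq_single_of_mem (c j) (Finset.mem_image_of_mem c (Finset.mem_univ j))
      (fun F _ hF => by rw [if_neg (fun h => hF h.2.symm), zero_mul])]
    by_cases h1 : N j <;> by_cases h2 : N k <;> by_cases h3 : c j = c k <;>
      simp [h1, h2, h3, eq_comm (a := c k)]
  rw [h]
  exact Finset.sum_nonneg fun _ _ => sq_nonneg _

/-- The discrete Hessian of a matroid rank function is negative semidefinite at every `S`:
`zᵀ H^r_S z ≤ 0` for every `z ∈ ℝ^m`. -/
theorem matroidRank_discreteHessian_negSemidef
    (m : ℕ) (M : Matroid (Fin m)) (hE : M.E = Set.univ) (S : Finset (Fin m)) :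
    ∀ z : Fin m → ℝ,
      z ⬝ᵥ (discreteHessian (fun A => (matroidRank M A : ℝ)) S *ᵥ z) ≤ 0 := by
  intro z
  have h := sum_sum_class_nonneg (fun j => j ∉ M.closure (S : Set (Fin m)))
    (fun j => M.closure (insert j (S : Set (Fin m)))) z
  have e : z ⬝ᵥ (discreteHessian (fun A => (matroidRank M A : ℝ)) S *ᵥ z) =
      -∑ j, ∑ k, z j * z k * (if j ∉ M.closure (S : Set (Fin m)) ∧
        k ∉ M.closure (S : Set (Fin m)) ∧ M.closure (insert j (S : Set (Fin m))) =
          M.closure (insert k (S : Set (Fin m))) then 1 else 0) := by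
    simp only [dotProduct, Matrix.mulVec, Finset.mul_sum, ← Finset.sum_neg_distrib,
      discreteHessian_matroidRank_apply M hE]
    refine Finset.sum_congr rfl fun j _ => Finset.sum_congr rfl fun k _ => ?_
    ring
  rw [e]
  refine neg_nonpos.mpr ?_
  convert h
end

section
/- Let v : 2^[m] → ℝ be a set function and define G_v : ℝ^m → ℝ by G_v(x) = Σ_{S ⊆ [m]} v(S) · Π_{j ∈ S} (1 − e^{−x_j}) · Π_{j ∉ S} e^{−x_j}. Then for every x ∈ ℝ^m and every j, k ∈ [m], the second mixed partial derivative satisfies ∂²G_v/∂x_j∂x_k (x) = Σ_{S ⊆ [m]} Π_{ℓ ∈ S} (1 − e^{−x_ℓ}) · Π_{ℓ ∉ S} e^{−x_ℓ} · H^v_S(j,k); that is, the Hessian of G_v at x equals Σ_{S ⊆ [m]} ( Π_{ℓ ∈ S} (1 − e^{−x_ℓ}) Π_{ℓ ∉ S} e^{−x_ℓ} ) · H^v_S. -/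
/-!
For `x ≥ 0`, `G_v(x)` is the expectation of `v` over a random set which contains each `l`
independently with probability `1 - e^{-x_l}`; the algebra below is valid for all `x`. Conditioning on the membership of `k` shows that, as a function of `x_k`
alone, `G_v` is `∑_{S ∌ k} w(S) (v(S ∪ {k}) (1 - e^{-x_k}) + v(S) e^{-x_k})` with weights `w(S)`
not depending on `x_k` (`Gfun_eq_sum_powerset_erase`). Differentiating gives
`∑_{S ∌ k} w(S) (v(S ∪ {k}) - v(S)) e^{-x_k}`, which is the same expansion for the difference
`Δ_k v : S ↦ v(S ∪ {k}) - v(S)`, since `Δ_k v` vanishes on sets containing `k`. Hence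
`∂_k G_v = G_{Δ_k v}` (`partialDeriv'_Gfun`); applying this twice gives the claim, because
`Δ_j Δ_k v (S) = H^v_S(j,k)`, also when `j = k`.
-/

open Finset

/-- The partial derivative of `f : ℝ^m → ℝ` with respect to coordinate `j` at `x`. -/
noncomputable def partialDeriv' {m : ℕ} (j : Fin m) (f : (Fin m → ℝ) → ℝ)
    (x : Fin m → ℝ) : ℝ :=
  deriv (fun t => f (Function.update x j t)) (x j)

/-- `G_v(x) = Σ_{S ⊆ [m]} v(S) · Π_{j ∈ S} (1 − e^{−x_j}) · Π_{j ∉ S} e^{−x_j}`. -/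
noncomputable def Gfun {m : ℕ} (v : Finset (Fin m) → ℝ) (x : Fin m → ℝ) : ℝ :=
  ∑ S : Finset (Fin m),
    v S * ((∏ j ∈ S, (1 - Real.exp (-x j))) * ∏ j ∈ Sᶜ, Real.exp (-x j))

/-- The discrete derivative `Δ_k v : S ↦ v(S ∪ {k}) - v(S)` of a set function. -/
def discreteDeriv {m : ℕ} (k : Fin m) (v : Finset (Fin m) → ℝ) (S : Finset (Fin m)) : ℝ :=
  v (S ∪ {k}) - v S

/-- For `k ∉ S`, the weight of `S` with the factor of `k` omitted: when `x ≥ 0`, the probability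
that the random set agrees with `S` off `k`. -/
noncomputable def weightOff {m : ℕ} (k : Fin m) (x : Fin m → ℝ) (S : Finset (Fin m)) : ℝ :=
  (∏ l ∈ S, (1 - Real.exp (-x l))) * ∏ l ∈ Sᶜ.erase k, Real.exp (-x l)

lemma weightOff_update {m : ℕ} (k : Fin m) (x : Fin m → ℝ) (t : ℝ) {S : Finset (Fin m)}
    (hS : k ∉ S) : weightOff k (Function.update x k t) S = weightOff k x S := by
  unfold weightOff
  congr 1
  · refine Finset.prod_congr rfl fun l hl => ?_
    rw [Function.update_of_ne (ne_of_mem_of_not_mem hl hS)]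
  · refine Finset.prod_congr rfl fun l hl => ?_
    rw [Function.update_of_ne (Finset.ne_of_mem_erase hl)]

/-- Conditioning on whether the random set contains `k`. -/
lemma Gfun_eq_sum_powerset_erase {m : ℕ} (k : Fin m) (v : Finset (Fin m) → ℝ) (x : Fin m → ℝ) :
    Gfun v x = ∑ S ∈ (univ.erase k).powerset,
      weightOff k x S * (v (S ∪ {k}) * (1 - Real.exp (-x k)) + v S * Real.exp (-x k)) := by
  have huniv : (univ : Finset (Finset (Fin m))) = (insert k (univ.erase k)).powerset := by
    rw [Finset.insert_erase (Finset.mem_univ k), Finset.powerset_univ]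
  unfold Gfun
  rw [huniv, Finset.sum_powerset_insert (Finset.notMem_erase k _), ← Finset.sum_add_distrib]
  refine Finset.sum_congr rfl fun S hS => ?_
  have hk : k ∉ S := fun h => Finset.notMem_erase k _ (Finset.mem_powerset.1 hS h)
  have hcompl := Finset.mul_prod_erase Sᶜ (fun l => Real.exp (-x l)) (Finset.mem_compl.2 hk)
  have hunion : S ∪ {k} = insert k S := by
    rw [Finset.union_comm, Finset.insert_eq]
  rw [← hcompl, Finset.prod_insert hk, Finset.compl_insert, hunion, weightOff]
  ring

lemma partialDeriv'_Gfun {m : ℕ} (k : Fin m) (v : Finset (Fin m) → ℝ) (x : Fin m → ℝ) :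
    partialDeriv' k (Gfun v) x = Gfun (discreteDeriv k v) x := by
  have hfun : (fun t => Gfun v (Function.update x k t)) = fun t =>
      ∑ S ∈ (univ.erase k).powerset,
        weightOff k x S * (v (S ∪ {k}) * (1 - Real.exp (-t)) + v S * Real.exp (-t)) := by
    funext t
    rw [Gfun_eq_sum_powerset_erase k]
    refine Finset.sum_congr rfl fun S hS => ?_
    have hk : k ∉ S := fun h => Finset.notMem_erase k _ (Finset.mem_powerset.1 hS h)
    rw [weightOff_update k x t hk, Function.update_self]
  have hexp : HasDerivAt (fun t : ℝ => Real.exp (-t)) (-Real.exp (-x k)) (x k) := by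
    simpa using (hasDerivAt_neg (x k)).exp
  unfold partialDeriv'
  rw [hfun, Gfun_eq_sum_powerset_erase k]
  refine (HasDerivAt.fun_sum fun S _ =>
    (((hexp.const_sub 1).const_mul (v (S ∪ {k}))).add
      (hexp.const_mul (v S))).const_mul (weightOff k x S)).deriv.trans ?_
  refine Finset.sum_congr rfl fun S _ => ?_
  simp only [discreteDeriv, Finset.union_assoc, Finset.union_self]
  ring

lemma discreteDeriv_discreteDeriv {m : ℕ} (v : Finset (Fin m) → ℝ) (S : Finset (Fin m))
    (j k : Fin m) : discreteDeriv j (discreteDeriv k v) S = discreteHessian v S j k := by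
  have hunion : S ∪ {j} ∪ {k} = S ∪ {j, k} := by
    rw [Finset.union_assoc, Finset.insert_eq j {k}]
  simp only [discreteDeriv, discreteHessian, Matrix.of_apply, hunion]
  ring

/-- The second mixed partial derivative of `G_v` at `x` is a nonnegative combination of
the entries of the discrete Hessians of `v`:
`∂²G_v/∂x_j∂x_k(x) = Σ_{S ⊆ [m]} Π_{ℓ∈S}(1−e^{−x_ℓ}) Π_{ℓ∉S} e^{−x_ℓ} · H^v_S(j,k)`. -/
theorem mixed_partial_Gfun_eq_discreteHessian_sum
    (m : ℕ) (v : Finset (Fin m) → ℝ) (x : Fin m → ℝ) (j k : Fin m) :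
    partialDeriv' j (fun y => partialDeriv' k (Gfun v) y) x
      = ∑ S : Finset (Fin m),
          ((∏ l ∈ S, (1 - Real.exp (-x l))) * ∏ l ∈ Sᶜ, Real.exp (-x l)) *
            discreteHessian v S j k := by
  simp only [partialDeriv'_Gfun]
  rw [Gfun]
  refine Finset.sum_congr rfl fun S _ => ?_
  rw [discreteDeriv_discreteDeriv, mul_comm]
end

section
/- Let v : 2^[m] → ℝ be a set function such that the discrete Hessian matrix H^v_S is negative semidefinite for every S ⊆ [m]. Then the function G_v : ℝ^m → ℝ defined by G_v(x) = Σ_{S ⊆ [m]} v(S) · Π_{j ∈ S} (1 − e^{−x_j}) · Π_{j ∉ S} e^{−x_j} is concave on the nonnegative orthant {x ∈ ℝ^m : x_j ≥ 0 for all j}. -/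
/-!
For `x ≥ 0`, `Gfun v x` is the expectation of `v S` for a random set `S` containing each `j`
independently with probability `1 - e^{-x j}`. Differentiating in the direction `z` only changes the set function:
the derivative of `Gfun v` is `Gfun (dirDiff z v)`, where
`dirDiff z v S = ∑ j, z j * (v (S ∪ {j}) - v S)` (`hasDerivAt_Gfun_line`). The second directional
derivative is therefore `Gfun (dirDiff z (dirDiff z v))`, and
`dirDiff z (dirDiff z v) S = zᵀ H_S z` exactly, diagonal terms included
(`dirDiff_dirDiff`). On the nonnegative orthant the weights are nonnegative, so the second derivative
along every segment is nonpositive.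
-/

open Finset Matrix

/-- The directional difference operator `v ↦ ∑ j, z j * (v (S ∪ {j}) - v S)` on set functions. -/
def dirDiff {m : ℕ} (z : Fin m → ℝ) (v : Finset (Fin m) → ℝ) (S : Finset (Fin m)) : ℝ :=
  ∑ j, z j * (v (S ∪ {j}) - v S)

lemma dirDiff_dirDiff {m : ℕ} (z : Fin m → ℝ) (v : Finset (Fin m) → ℝ) (S : Finset (Fin m)) :
    dirDiff z (dirDiff z v) S = z ⬝ᵥ (discreteHessian v S *ᵥ z) := by
  simp only [dirDiff, discreteHessian, dotProduct, mulVec, Matrix.of_apply]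
  refine Finset.sum_congr rfl fun j _ => ?_
  rw [← Finset.sum_sub_distrib]
  congr 1
  refine Finset.sum_congr rfl fun k _ => ?_
  rw [Finset.union_assoc, ← Finset.insert_eq]
  ring

lemma Gfun_eq_sum_prod_ite {m : ℕ} (v : Finset (Fin m) → ℝ) (x : Fin m → ℝ) :
    Gfun v x =
      ∑ S : Finset (Fin m), v S * ∏ j, if j ∈ S then 1 - Real.exp (-x j) else Real.exp (-x j) := by
  unfold Gfun
  refine Finset.sum_congr rfl fun S _ => ?_
  rw [Finset.prod_ite]
  congr 3
  · ext; simp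
  · ext; simp

lemma sum_finset_eq_sum_pairs {m : ℕ} (i : Fin m) (F : Finset (Fin m) → ℝ) :
    ∑ S, F S = ∑ S ∈ (univ.erase i).powerset, (F S + F (insert i S)) := by
  rw [Finset.sum_add_distrib, ← Finset.sum_powerset_insert (Finset.notMem_erase i univ),
    Finset.insert_erase (Finset.mem_univ i), Finset.powerset_univ]

/-- Pairing `S` with `insert i S` moves the derivative of the `i`-th factor (`e` if `i ∈ S`, `-e`
otherwise) onto the set function. -/
lemma sum_pair_derivative {m : ℕ} (v : Finset (Fin m) → ℝ) (e : Fin m → ℝ) (i : Fin m) :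
    ∑ S, v S * ((∏ j ∈ univ.erase i, if j ∈ S then 1 - e j else e j) *
        if i ∈ S then e i else -e i) =
      ∑ S, (v (S ∪ {i}) - v S) * ∏ j, if j ∈ S then 1 - e j else e j := by
  rw [sum_finset_eq_sum_pairs i, sum_finset_eq_sum_pairs i]
  refine Finset.sum_congr rfl fun S hS => ?_
  have hi : i ∉ S := fun h => Finset.notMem_erase i univ (Finset.mem_powerset.1 hS h)
  have hP : (∏ j ∈ univ.erase i, if j ∈ insert i S then 1 - e j else e j) =
      ∏ j ∈ univ.erase i, if j ∈ S then 1 - e j else e j :=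
    Finset.prod_congr rfl fun j hj => by simp [Finset.ne_of_mem_erase hj]
  have hU : S ∪ {i} = insert i S := by rw [Finset.union_comm, Finset.insert_eq]
  have hU' : insert i S ∪ {i} = insert i S := by simp
  rw [hP, hU, hU', ← Finset.mul_prod_erase univ _ (Finset.mem_univ i)]
  simp only [hi, if_false, Finset.mem_insert_self, if_true]
  ring

lemma hasDerivAt_Gfun_line {m : ℕ} (v : Finset (Fin m) → ℝ) (x z : Fin m → ℝ) (t : ℝ) :
    HasDerivAt (fun s : ℝ => Gfun v (x + s • z)) (Gfun (dirDiff z v) (x + t • z)) t := by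
  have hfac : ∀ (S : Finset (Fin m)) (j : Fin m), HasDerivAt
      (fun s : ℝ => if j ∈ S then 1 - Real.exp (-(x + s • z) j) else Real.exp (-(x + s • z) j))
      (z j * if j ∈ S then Real.exp (-(x + t • z) j) else -Real.exp (-(x + t • z) j)) t := by
    intro S j
    have hlin : HasDerivAt (fun s : ℝ => -(x + s • z) j) (-z j) t := by
      have h := (((hasDerivAt_id t).mul_const (z j)).const_add (x j)).fun_neg
      simpa using h
    split_ifs
    · exact (hlin.exp.const_sub 1).congr_deriv (by ring)
    · exact hlin.exp.congr_deriv (by ring)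
  simp only [Gfun_eq_sum_prod_ite]
  have h := HasDerivAt.fun_sum (u := univ) fun (S : Finset (Fin m)) _ =>
    (HasDerivAt.fun_finsetProd (u := univ) fun j _ => hfac S j).const_mul (v S)
  refine h.congr_deriv ?_
  simp only [dirDiff, Finset.mul_sum, Finset.sum_mul, smul_eq_mul]
  rw [Finset.sum_comm]
  conv_rhs => rw [Finset.sum_comm]
  refine Finset.sum_congr rfl fun i _ => ?_
  have hp := congrArg (z i * ·) (sum_pair_derivative v (fun j => Real.exp (-(x + t • z) j)) i)
  simp only [Finset.mul_sum] at hp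
  calc _ = _ := Finset.sum_congr rfl fun S _ => by ring
    _ = _ := hp
    _ = _ := Finset.sum_congr rfl fun S _ => by ring

lemma Gfun_nonpos {m : ℕ} {v : Finset (Fin m) → ℝ} (hv : ∀ S, v S ≤ 0) {x : Fin m → ℝ}
    (hx : ∀ j, 0 ≤ x j) : Gfun v x ≤ 0 := by
  refine Finset.sum_nonpos fun S _ => mul_nonpos_of_nonpos_of_nonneg (hv S) (mul_nonneg ?_ ?_)
  · exact Finset.prod_nonneg fun j _ => sub_nonneg.2 (Real.exp_le_one_iff.2 (by simpa using hx j))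
  · exact Finset.prod_nonneg fun j _ => (Real.exp_pos _).le

/-- If all discrete Hessians of `v` are negative semidefinite, then `G_v` is concave on
the nonnegative orthant. -/
theorem Gfun_concaveOn_of_discreteHessian_negSemidef
    (m : ℕ) (v : Finset (Fin m) → ℝ)
    (hH : ∀ S : Finset (Fin m), ∀ z : Fin m → ℝ,
      z ⬝ᵥ (discreteHessian v S *ᵥ z) ≤ 0) :
    ConcaveOn ℝ {x : Fin m → ℝ | ∀ j, 0 ≤ x j} (Gfun v) := by
  have hconv : Convex ℝ {x : Fin m → ℝ | ∀ j, 0 ≤ x j} := convex_Ici (0 : Fin m → ℝ)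
  refine ⟨hconv, fun x hx y hy a b ha hb hab => ?_⟩
  have hline : ConcaveOn ℝ (Set.Icc (0 : ℝ) 1) (fun s => Gfun v (x + s • (y - x))) := by
    refine concaveOn_of_hasDerivWithinAt2_nonpos (convex_Icc 0 1)
      (fun s _ => (hasDerivAt_Gfun_line v x (y - x) s).continuousAt.continuousWithinAt)
      (fun s _ => (hasDerivAt_Gfun_line v x (y - x) s).hasDerivWithinAt)
      (fun s _ => (hasDerivAt_Gfun_line _ x (y - x) s).hasDerivWithinAt) fun s hs => ?_
    exact Gfun_nonpos (fun S => (dirDiff_dirDiff _ v S).trans_le (hH S _))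
      (hconv.add_smul_sub_mem hx hy (interior_subset hs))
  have h := hline.2 (Set.left_mem_Icc.2 zero_le_one) (Set.right_mem_Icc.2 zero_le_one) ha hb hab
  have hpt : x + b • (y - x) = a • x + b • y := by
    rw [← eq_sub_iff_add_eq] at hab
    subst hab
    module
  simpa [hpt] using h
end

section
/- Let L be a finite set, let A_1, …, A_m ⊆ L, and let v : 2^[m] → ℝ be the coverage function v(S) = |∪_{j ∈ S} A_j|. Define G_v : ℝ^m → ℝ by G_v(x) = Σ_{S ⊆ [m]} v(S) · Π_{j ∈ S} (1 − e^{−x_j}) · Π_{j ∉ S} e^{−x_j}. Then for every x ∈ ℝ^m, G_v(x) = Σ_{ℓ ∈ L} ( 1 − exp( − Σ_{j : ℓ ∈ A_j} x_j ) ), and G_v is concave on ℝ^m. -/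
/-!
The value `G_v(x)` is the expected value of `v` on a random set `S` that contains each `j`
independently with weight `1 - exp (-x j)` (a signed weight when `x j < 0`). By linearity,
each point `l` contributes one minus the weight of the event that `S` avoids every `j` with
`l ∈ A j`. The indicator of that event is a product over `S`, so its weight factors over the
coordinates (`sum_indicator_mul_weight`) into `exp (-∑ x j)` over those `j`. Concavity
follows because each summand is one minus the exponential of a linear form.
-/

open Finset

/-- The total weight of the sets `S` disjoint from `{j | p j}` is `∏ exp (-x j)` over that set;
`p := fun _ => False` gives total weight one. -/
theorem sum_indicator_mul_weight {m : ℕ} (p : Fin m → Prop) [DecidablePred p]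
    (x : Fin m → ℝ) :
    ∑ S : Finset (Fin m), (∏ j ∈ S, if p j then (0 : ℝ) else 1) *
        ((∏ j ∈ S, (1 - Real.exp (-x j))) * ∏ j ∈ Sᶜ, Real.exp (-x j))
      = Real.exp (-(∑ j ∈ Finset.univ.filter p, x j)) := by
  simp_rw [← mul_assoc, ← Finset.prod_mul_distrib]
  rw [← Fintype.prod_add, ← Finset.sum_neg_distrib, Real.exp_sum, Finset.prod_filter]
  refine Finset.prod_congr rfl fun j _ => ?_
  split_ifs <;> simp

theorem sum_weight {m : ℕ} (x : Fin m → ℝ) :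
    ∑ S : Finset (Fin m),
        ((∏ j ∈ S, (1 - Real.exp (-x j))) * ∏ j ∈ Sᶜ, Real.exp (-x j)) = 1 := by
  simpa using sum_indicator_mul_weight (fun _ => False) x

theorem card_biUnion_eq_sum_indicator {m : ℕ} {L : Type} [Fintype L] [DecidableEq L]
    (A : Fin m → Finset L) (S : Finset (Fin m)) :
    ((S.biUnion A).card : ℝ) = ∑ l : L, (1 - ∏ j ∈ S, if l ∈ A j then (0 : ℝ) else 1) := by
  have h : ∀ l : L, (1 - ∏ j ∈ S, if l ∈ A j then (0 : ℝ) else 1)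
      = if l ∈ S.biUnion A then 1 else 0 := by
    intro l
    by_cases hl : l ∈ S.biUnion A
    · obtain ⟨j, hj, hlj⟩ := Finset.mem_biUnion.1 hl
      have h0 : (∏ j ∈ S, if l ∈ A j then (0 : ℝ) else 1) = 0 :=
        Finset.prod_eq_zero hj (if_pos hlj)
      rw [if_pos hl, h0, sub_zero]
    · rw [if_neg hl, Finset.prod_eq_one, sub_self]
      intro j hj
      exact if_neg fun hlj => hl (Finset.mem_biUnion.2 ⟨j, hj, hlj⟩)
  simp_rw [h]
  rw [Finset.sum_ite_mem, Finset.univ_inter, Finset.sum_const, nsmul_eq_mul, mul_one]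

/-- For the coverage function `v(S) = |∪_{j∈S} A_j|`:
`G_v(x) = Σ_{ℓ∈L} (1 − exp(−Σ_{j : ℓ ∈ A_j} x_j))` for every `x ∈ ℝ^m`, and `G_v` is
concave on all of `ℝ^m`. -/
theorem coverage_Gfun_eq_and_concave
    (m : ℕ) (L : Type) [Fintype L] [DecidableEq L]
    (A : Fin m → Finset L) (v : Finset (Fin m) → ℝ)
    (hv : ∀ S : Finset (Fin m), v S = ((S.biUnion A).card : ℝ)) :
    (∀ x : Fin m → ℝ,
      Gfun v x
        = ∑ l : L, (1 - Real.exp (-(∑ j ∈ Finset.univ.filter (fun j => l ∈ A j), x j))))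
    ∧ ConcaveOn ℝ Set.univ (Gfun v) := by
  have key : ∀ x : Fin m → ℝ, Gfun v x
      = ∑ l : L, (1 - Real.exp (-(∑ j ∈ Finset.univ.filter (fun j => l ∈ A j), x j))) := by
    intro x
    simp_rw [Gfun, hv, card_biUnion_eq_sum_indicator, Finset.sum_mul]
    rw [Finset.sum_comm]
    refine Finset.sum_congr rfl fun l _ => ?_
    simp_rw [sub_mul, one_mul]
    rw [Finset.sum_sub_distrib, sum_weight, sum_indicator_mul_weight]
  refine ⟨key, convex_univ, fun x _ y _ a b ha hb hab => ?_⟩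
  rw [key, key, key, smul_eq_mul, smul_eq_mul, Finset.mul_sum, Finset.mul_sum,
    ← Finset.sum_add_distrib]
  refine Finset.sum_le_sum fun l _ => ?_
  have h := convexOn_exp.2
    (Set.mem_univ (-(∑ j ∈ Finset.univ.filter (fun j => l ∈ A j), x j)))
    (Set.mem_univ (-(∑ j ∈ Finset.univ.filter (fun j => l ∈ A j), y j))) ha hb hab
  have hlin : -(∑ j ∈ Finset.univ.filter (fun j => l ∈ A j), (a • x + b • y) j)
      = a • (-(∑ j ∈ Finset.univ.filter (fun j => l ∈ A j), x j))
        + b • (-(∑ j ∈ Finset.univ.filter (fun j => l ∈ A j), y j)) := by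
    simp only [Pi.add_apply, Pi.smul_apply, smul_eq_mul, Finset.sum_add_distrib,
      ← Finset.mul_sum]
    ring
  rw [hlin]
  simp only [smul_eq_mul] at h ⊢
  linarith
end
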